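/- arXiv:2208.14753 — 2 statements merged into one kernel-verified Lean document; each statement's English description precedes it below -/
import Mathlib

section
/- For p ≥ 1 and probability measures μ, ν on ℝ with finite p-th moments, the p-Wasserstein distance satisfies W_p(μ,ν) = ‖X_μ − X_ν‖_{L^p(0,1)}, where X_μ, X_ν are the respective quantile functions. -/
open Set MeasureTheory
open scoped ENNReal NNReal

/-- Quantile function of a probability measure on `ℝ`. -/
noncomputable def quantile (μ : Measure ℝ) (z : ℝ) : ℝ :=
  sInf {a : ℝ | z < (μ (Iio a)).toReal}

/-- The `p`-Wasserstein transport cost `W_p(μ,ν)^p`: the infimum over couplings `π`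
of `μ` and `ν` of `∫ |x - y|^p dπ`. -/
noncomputable def WpCost (p : ℝ) (μ ν : Measure ℝ) : ℝ≥0∞ :=
  sInf {c | ∃ π : Measure (ℝ × ℝ), IsProbabilityMeasure π ∧
    π.map Prod.fst = μ ∧ π.map Prod.snd = ν ∧
    c = ∫⁻ q, ENNReal.ofReal (|q.1 - q.2| ^ p) ∂π}

/-- Positive part as the integral of indicators, integrated against a measure. -/
lemma aux_pos_part (π : Measure (ℝ × ℝ)) [SFinite π] (r : ℝ) :
    ∫⁻ q, ENNReal.ofReal (q.2 - q.1 - r) ∂π = ∫⁻ s, π (Iio s ×ˢ Ici (s + r)) := by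
  have hm : MeasurableSet {w : (ℝ × ℝ) × ℝ | w.1.1 < w.2 ∧ w.2 + r ≤ w.1.2} := by
    have m1 : MeasurableSet {w : (ℝ × ℝ) × ℝ | w.1.1 < w.2} :=
      measurableSet_lt (by fun_prop) (by fun_prop)
    have m2 : MeasurableSet {w : (ℝ × ℝ) × ℝ | w.2 + r ≤ w.1.2} :=
      measurableSet_le (by fun_prop) (by fun_prop)
    exact m1.inter m2
  have h1 := Measure.prod_apply (μ := π) (ν := (volume : Measure ℝ)) hm
  have h2 := Measure.prod_apply_symm (μ := π) (ν := (volume : Measure ℝ)) hm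
  rw [h1] at h2
  convert h2 using 2
  · ext q
    have : (Prod.mk q ⁻¹' {w : (ℝ × ℝ) × ℝ | w.1.1 < w.2 ∧ w.2 + r ≤ w.1.2})
        = Ioc q.1 (q.2 - r) := by
      ext s
      simp only [mem_preimage, mem_ofPred_eq, mem_Ioc]
      constructor <;> rintro ⟨h, h'⟩ <;> exact ⟨h, by linarith⟩
    rw [this, Real.volume_Ioc]
    congr 1; ring
  · ext s
    rfl

lemma aux_kernel (p : ℝ) (hp : 1 < p) (u : ℝ) :
    ENNReal.ofReal ((max u 0) ^ p) =
      ∫⁻ r in Ioi (0:ℝ), ENNReal.ofReal (u - r) * ENNReal.ofReal (p * (p - 1) * r ^ (p - 2)) := by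
  rcases le_or_gt u 0 with hu | hu
  · rw [max_eq_right hu, Real.zero_rpow (by linarith), ENNReal.ofReal_zero]
    symm
    rw [setLIntegral_congr_fun (g := fun _ => 0) measurableSet_Ioi]
    · simp
    · intro r hr
      have : u - r ≤ 0 := by have := mem_Ioi.1 hr; linarith
      simp [ENNReal.ofReal_of_nonpos this]
  rw [max_eq_left hu.le]
  have hsplit : Ioi (0:ℝ) = Ioc 0 u ∪ Ioi u := (Ioc_union_Ioi_eq_Ioi hu.le).symm
  have hz : ∫⁻ r in Ioi u, ENNReal.ofReal (u - r) * ENNReal.ofReal (p * (p - 1) * r ^ (p - 2)) = 0 := by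
    rw [setLIntegral_congr_fun (g := fun _ => 0) measurableSet_Ioi]
    · simp
    · intro r hr
      have : u - r ≤ 0 := by have := mem_Ioi.1 hr; linarith
      simp [ENNReal.ofReal_of_nonpos this]
  rw [hsplit, lintegral_union measurableSet_Ioi Ioc_disjoint_Ioi_same, hz, add_zero]
  have i1 : IntervalIntegrable (fun r : ℝ => r ^ (p - 2)) volume 0 u :=
    intervalIntegral.intervalIntegrable_rpow' (by linarith)
  have i2 : IntervalIntegrable (fun r : ℝ => r ^ (p - 1)) volume 0 u :=
    intervalIntegral.intervalIntegrable_rpow' (by linarith)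
  have i3 : IntervalIntegrable
      (fun r : ℝ => (u * (p * (p - 1))) * r ^ (p - 2) - (p * (p - 1)) * r ^ (p - 1)) volume 0 u :=
    (i1.const_mul _).sub (i2.const_mul _)
  have hval : ∫ r in (0:ℝ)..u, ((u * (p * (p - 1))) * r ^ (p - 2) - (p * (p - 1)) * r ^ (p - 1))
      = u ^ p := by
    rw [intervalIntegral.integral_sub (i1.const_mul _) (i2.const_mul _),
      intervalIntegral.integral_const_mul, intervalIntegral.integral_const_mul,
      integral_rpow (Or.inl (by linarith)), integral_rpow (Or.inl (by linarith))]
    have e1 : p - 2 + 1 = p - 1 := by ring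
    have e2 : p - 1 + 1 = p := by ring
    rw [e1, e2, Real.zero_rpow (by linarith), Real.zero_rpow (by linarith)]
    have e3 : u ^ p = u * u ^ (p - 1) := by
      rw [← Real.rpow_one_add' hu.le (by linarith)]; congr 1; ring
    have : p - 1 ≠ 0 := by linarith
    have : p ≠ 0 := by linarith
    rw [e3]; field_simp; ring
  have heq : EqOn (fun r : ℝ => (u * (p * (p - 1))) * r ^ (p - 2) - (p * (p - 1)) * r ^ (p - 1))
      (fun r : ℝ => (u - r) * (p * (p - 1) * r ^ (p - 2))) (Ioc 0 u) := by
    intro r hr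
    have e3 : r ^ (p - 1) = r * r ^ (p - 2) := by
      rw [← Real.rpow_one_add' hr.1.le (by linarith)]; congr 1; ring
    simp only [e3]; ring
  have hw : ∀ r : ℝ, 0 < r → 0 ≤ p * (p - 1) * r ^ (p - 2) := fun r hr => by
    have : 0 < p - 1 := by linarith
    positivity
  rw [← hval, intervalIntegral.integral_of_le hu.le,
    ofReal_integral_eq_lintegral_ofReal i3.1]
  · apply setLIntegral_congr_fun measurableSet_Ioc
    intro r hr
    simp only
    rw [← ENNReal.ofReal_mul (by linarith [hr.2])]
    exact congrArg _ (heq hr)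
  · filter_upwards [ae_restrict_mem measurableSet_Ioc] with r hr
    have := heq hr
    simp only at this
    simp only [this, Pi.zero_apply]
    exact mul_nonneg (by linarith [hr.2]) (hw r hr.1)

/-- One-sided cost comparison. -/
lemma aux_one_side (p : ℝ) (hp : 1 ≤ p) (ρ π : Measure (ℝ × ℝ)) [SFinite ρ] [SFinite π]
    (h : ∀ s t, ρ (Iio s ×ˢ Ici t) ≤ π (Iio s ×ˢ Ici t)) :
    ∫⁻ q, ENNReal.ofReal ((max (q.2 - q.1) 0) ^ p) ∂ρ
      ≤ ∫⁻ q, ENNReal.ofReal ((max (q.2 - q.1) 0) ^ p) ∂π := by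
  have key : ∀ r : ℝ, ∫⁻ q, ENNReal.ofReal (q.2 - q.1 - r) ∂ρ
      ≤ ∫⁻ q, ENNReal.ofReal (q.2 - q.1 - r) ∂π := by
    intro r
    rw [aux_pos_part, aux_pos_part]
    exact lintegral_mono fun s => h _ _
  rcases hp.eq_or_lt with rfl | hp
  · have := key 0
    have e : ∀ x : ℝ, ENNReal.ofReal (max x 0) = ENNReal.ofReal x := fun x => by
      rcases le_total x 0 with hx | hx
      · simp [hx, ENNReal.ofReal_of_nonpos hx]
      · simp [hx]
    simpa [Real.rpow_one, e] using this
  · have rep : ∀ (m : Measure (ℝ × ℝ)) [SFinite m],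
        ∫⁻ q, ENNReal.ofReal ((max (q.2 - q.1) 0) ^ p) ∂m
        = ∫⁻ r in Ioi (0:ℝ), (∫⁻ q, ENNReal.ofReal (q.2 - q.1 - r) ∂m)
            * ENNReal.ofReal (p * (p - 1) * r ^ (p - 2)) := by
      intro m _
      simp_rw [aux_kernel p hp]
      rw [lintegral_lintegral_swap]
      · apply lintegral_congr
        intro r
        rw [lintegral_mul_const _ (by fun_prop)]
      · apply Measurable.aemeasurable
        simp only [Function.uncurry_def]
        fun_prop
    rw [rep, rep]
    exact lintegral_mono fun r => mul_le_mul_left (key r) _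

lemma aux_cost_split (p : ℝ) (hp : 1 ≤ p) (m : Measure (ℝ × ℝ)) :
    ∫⁻ q, ENNReal.ofReal (|q.1 - q.2| ^ p) ∂m
      = ∫⁻ q, ENNReal.ofReal ((max (q.2 - q.1) 0) ^ p) ∂m
        + ∫⁻ q, ENNReal.ofReal ((max (q.2 - q.1) 0) ^ p) ∂(m.map Prod.swap) := by
  rw [lintegral_map (by fun_prop) measurable_swap, ← lintegral_add_left (by fun_prop)]
  apply lintegral_congr
  intro q
  simp only [Prod.fst_swap, Prod.snd_swap]
  have h0 : (0:ℝ) ^ p = 0 := Real.zero_rpow (by linarith)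
  rcases le_total q.1 q.2 with h | h
  · rw [abs_of_nonpos (by linarith), max_eq_left (by linarith), max_eq_right (by linarith), h0]
    simp
  · rw [abs_of_nonneg (by linarith), max_eq_right (by linarith), max_eq_left (by linarith), h0]
    simp

lemma aux_coupling_bound (μ ν : Measure ℝ) [IsProbabilityMeasure μ] [IsProbabilityMeasure ν]
    (π : Measure (ℝ × ℝ)) [IsProbabilityMeasure π] (h1 : π.map Prod.fst = μ)
    (h2 : π.map Prod.snd = ν) (s t : ℝ) :
    ENNReal.ofReal ((μ (Iio s)).toReal - (ν (Iio t)).toReal) ≤ π (Iio s ×ˢ Ici t) := by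
  rw [ENNReal.ofReal_sub _ ENNReal.toReal_nonneg, ENNReal.ofReal_toReal (measure_ne_top _ _),
    ENNReal.ofReal_toReal (measure_ne_top _ _), tsub_le_iff_right, ← h1, ← h2,
    Measure.map_apply measurable_fst measurableSet_Iio,
    Measure.map_apply measurable_snd measurableSet_Iio]
  refine (measure_mono ?_).trans (measure_union_le _ _)
  intro q hq
  rcases lt_or_ge q.2 t with h | h
  · exact Or.inr h
  · exact Or.inl ⟨hq, h⟩

lemma aux_quantile_lt (μ : Measure ℝ) [IsProbabilityMeasure μ] {z : ℝ} (hz : z ∈ Ioo (0:ℝ) 1)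
    (a : ℝ) : quantile μ z < a ↔ z < (μ (Iio a)).toReal := by
  have mono : Monotone fun a => (μ (Iio a)).toReal := fun a b hab =>
    ENNReal.toReal_mono (measure_ne_top _ _) (measure_mono (Iio_subset_Iio hab))
  -- nonempty
  have hne : {a : ℝ | z < (μ (Iio a)).toReal}.Nonempty := by
    have ht : Filter.Tendsto (fun n : ℕ => μ (Iio (n:ℝ))) Filter.atTop (nhds (μ univ)) := by
      have := tendsto_measure_iUnion_atTop (μ := μ) (s := fun n : ℕ => Iio (n:ℝ))
        (fun a b hab => Iio_subset_Iio (by exact_mod_cast hab))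
      have he : (⋃ n : ℕ, Iio (n:ℝ)) = univ :=
        iUnion_eq_univ_iff.2 (fun x => (exists_nat_gt x).imp fun n hn => mem_Iio.2 hn)
      rwa [he] at this
    have ht' := (ENNReal.tendsto_toReal (measure_ne_top μ univ)).comp ht
    rw [measure_univ, ENNReal.toReal_one] at ht'
    obtain ⟨n, hn⟩ := (ht'.eventually (lt_mem_nhds hz.2)).exists
    exact ⟨n, hn⟩
  have hbd : BddBelow {a : ℝ | z < (μ (Iio a)).toReal} := by
    have ht : Filter.Tendsto (fun n : ℕ => μ (Iio (-(n:ℝ)))) Filter.atTop (nhds (μ ∅)) := by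
      have := tendsto_measure_iInter_atTop (μ := μ) (s := fun n : ℕ => Iio (-(n:ℝ)))
        (fun _ => measurableSet_Iio.nullMeasurableSet)
        (fun a b hab => Iio_subset_Iio (by simpa using hab)) ⟨0, measure_ne_top _ _⟩
      have he : (⋂ n : ℕ, Iio (-(n:ℝ))) = ∅ := by
        rw [iInter_eq_empty_iff]
        intro x
        obtain ⟨n, hn⟩ := exists_nat_gt (-x)
        exact ⟨n, by simp only [mem_Iio, not_lt]; linarith⟩
      rwa [he] at this
    have ht' := (ENNReal.tendsto_toReal (measure_ne_top μ ∅)).comp ht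
    rw [measure_empty, ENNReal.toReal_zero] at ht'
    obtain ⟨n, hn⟩ := (ht'.eventually (gt_mem_nhds hz.1)).exists
    refine ⟨-(n:ℝ), fun a ha => ?_⟩
    by_contra! hlt
    have h1 := mono hlt.le
    simp only [mem_ofPred_eq, Function.comp] at ha hn h1
    linarith
  constructor
  · intro h
    obtain ⟨b, hb, hba⟩ := (csInf_lt_iff hbd hne).1 h
    exact lt_of_lt_of_le hb (mono hba.le)
  · intro h
    have ht : Filter.Tendsto (fun n : ℕ => μ (Iio (a - 1 / ((n:ℝ) + 1)))) Filter.atTop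
        (nhds (μ (Iio a))) := by
      have := tendsto_measure_iUnion_atTop (μ := μ) (s := fun n : ℕ => Iio (a - 1 / ((n:ℝ) + 1)))
        (fun m n hmn => Iio_subset_Iio (sub_le_sub_left (Nat.one_div_le_one_div hmn) a))
      have he : (⋃ n : ℕ, Iio (a - 1 / ((n:ℝ) + 1))) = Iio a := by
        ext x
        simp only [mem_iUnion, mem_Iio]
        constructor
        · rintro ⟨n, hn⟩
          have : 0 < 1 / ((n:ℝ) + 1) := by positivity
          linarith
        · intro hx
          obtain ⟨n, hn⟩ := exists_nat_one_div_lt (sub_pos.2 hx)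
          exact ⟨n, by linarith⟩
      rwa [he] at this
    have ht' := (ENNReal.tendsto_toReal (measure_ne_top μ (Iio a))).comp ht
    obtain ⟨n, hn⟩ := (ht'.eventually (lt_mem_nhds h)).exists
    have : quantile μ z ≤ a - 1 / ((n:ℝ) + 1) := csInf_le hbd hn
    have : 0 < 1 / ((n:ℝ) + 1) := by positivity
    linarith

lemma aux_quantile_aemeas (μ : Measure ℝ) [IsProbabilityMeasure μ] :
    AEMeasurable (quantile μ) (volume.restrict (Ioo (0:ℝ) 1)) := by
  apply aemeasurable_restrict_of_monotoneOn measurableSet_Ioo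
  intro x hx y hy hxy
  by_contra! h
  have h1 := (aux_quantile_lt μ hy _).1 h
  exact lt_irrefl _ ((aux_quantile_lt μ hx _).2 (lt_of_le_of_lt hxy h1))

lemma aux_toReal_le_one (μ : Measure ℝ) [IsProbabilityMeasure μ] (s : Set ℝ) :
    (μ s).toReal ≤ 1 := by
  simpa using ENNReal.toReal_mono ENNReal.one_ne_top (prob_le_one (μ := μ) (s := s))

lemma aux_map_quantile (μ : Measure ℝ) [IsProbabilityMeasure μ] :
    (volume.restrict (Ioo (0:ℝ) 1)).map (quantile μ) = μ := by
  have hprob : IsProbabilityMeasure (volume.restrict (Ioo (0:ℝ) 1)) := ⟨by simp⟩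
  have := Measure.isProbabilityMeasure_map (aux_quantile_aemeas μ)
  have hIio : ∀ a, (volume.restrict (Ioo (0:ℝ) 1)).map (quantile μ) (Iio a) = μ (Iio a) := by
    intro a
    rw [Measure.map_apply_of_aemeasurable (aux_quantile_aemeas μ) measurableSet_Iio,
      Measure.restrict_apply' measurableSet_Ioo]
    have : quantile μ ⁻¹' Iio a ∩ Ioo (0:ℝ) 1 = Ioo 0 (μ (Iio a)).toReal := by
      ext z
      constructor
      · rintro ⟨h, hz⟩
        exact ⟨hz.1, (aux_quantile_lt μ hz a).1 h⟩
      · rintro ⟨h, h'⟩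
        have hz : z ∈ Ioo (0:ℝ) 1 := ⟨h, h'.trans_le (aux_toReal_le_one μ _)⟩
        exact ⟨(aux_quantile_lt μ hz a).2 h', hz⟩
    rw [this, Real.volume_Ioo, sub_zero, ENNReal.ofReal_toReal (measure_ne_top _ _)]
  apply Measure.ext_of_Ici
  intro a
  rw [← compl_Iio, prob_compl_eq_one_sub measurableSet_Iio,
    prob_compl_eq_one_sub measurableSet_Iio, hIio]

lemma aux_comonotone (μ ν : Measure ℝ) [IsProbabilityMeasure μ] [IsProbabilityMeasure ν]
    (s t : ℝ) :
    (volume.restrict (Ioo (0:ℝ) 1)).map (fun z => (quantile μ z, quantile ν z)) (Iio s ×ˢ Ici t)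
      ≤ ENNReal.ofReal ((μ (Iio s)).toReal - (ν (Iio t)).toReal) := by
  rw [Measure.map_apply_of_aemeasurable
    ((aux_quantile_aemeas μ).prodMk (aux_quantile_aemeas ν))
    (measurableSet_Iio.prod measurableSet_Ici), Measure.restrict_apply' measurableSet_Ioo,
    ← Real.volume_Ico]
  apply measure_mono
  rintro z ⟨⟨h1, h2⟩, hz⟩
  refine ⟨?_, (aux_quantile_lt μ hz s).1 h1⟩
  by_contra! h
  exact absurd ((aux_quantile_lt ν hz t).2 h) (not_lt.2 h2)

/-- For `p ≥ 1` and probability measures on `ℝ` with finite `p`-th moments,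
`W_p(μ,ν) = ‖X_μ - X_ν‖_{L^p(0,1)}` (stated for the `p`-th powers of both sides). -/
theorem wasserstein_eq_quantile_Lp (p : ℝ) (hp : 1 ≤ p)
    (μ ν : Measure ℝ) [IsProbabilityMeasure μ] [IsProbabilityMeasure ν]
    (hμ : (∫⁻ x, ENNReal.ofReal (|x| ^ p) ∂μ) < ⊤)
    (hν : (∫⁻ x, ENNReal.ofReal (|x| ^ p) ∂ν) < ⊤) :
    WpCost p μ ν
      = ∫⁻ z in Ioo (0:ℝ) 1, ENNReal.ofReal (|quantile μ z - quantile ν z| ^ p) := by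
  have hprob : IsProbabilityMeasure (volume.restrict (Ioo (0:ℝ) 1)) := ⟨by simp⟩
  have hmμ := aux_quantile_aemeas μ
  have hmν := aux_quantile_aemeas ν
  have hpair := hmμ.prodMk hmν
  set ρ := (volume.restrict (Ioo (0:ℝ) 1)).map (fun z => (quantile μ z, quantile ν z)) with hρ
  have hρp : IsProbabilityMeasure ρ := Measure.isProbabilityMeasure_map hpair
  have hcost : ∫⁻ z in Ioo (0:ℝ) 1, ENNReal.ofReal (|quantile μ z - quantile ν z| ^ p)
      = ∫⁻ q, ENNReal.ofReal (|q.1 - q.2| ^ p) ∂ρ := by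
    rw [hρ, lintegral_map' (Measurable.aemeasurable (by fun_prop)) hpair]
  have hswap : ρ.map Prod.swap
      = (volume.restrict (Ioo (0:ℝ) 1)).map (fun z => (quantile ν z, quantile μ z)) := by
    rw [hρ, AEMeasurable.map_map_of_aemeasurable measurable_swap.aemeasurable hpair]
    rfl
  rw [hcost]
  apply le_antisymm
  · apply sInf_le
    refine ⟨ρ, hρp, ?_, ?_, rfl⟩
    · rw [hρ, AEMeasurable.map_map_of_aemeasurable measurable_fst.aemeasurable hpair]
      exact aux_map_quantile μ
    · rw [hρ, AEMeasurable.map_map_of_aemeasurable measurable_snd.aemeasurable hpair]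
      exact aux_map_quantile ν
  · apply le_sInf
    rintro c ⟨π, hπ, h1, h2, rfl⟩
    rw [aux_cost_split p hp, aux_cost_split p hp]
    have hπs : IsProbabilityMeasure (π.map Prod.swap) :=
      Measure.isProbabilityMeasure_map measurable_swap.aemeasurable
    apply add_le_add
    · exact aux_one_side p hp _ _ fun s t =>
        (aux_comonotone μ ν s t).trans (aux_coupling_bound μ ν π h1 h2 s t)
    · rw [hswap]
      refine aux_one_side p hp _ _ fun s t =>
        (aux_comonotone ν μ s t).trans (aux_coupling_bound ν μ _ ?_ ?_ s t)
      · rw [Measure.map_map measurable_fst measurable_swap]; exact h2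
      · rw [Measure.map_map measurable_snd measurable_swap]; exact h1
end

section
/- With the same notation, the p-th moments of the empirical measures μ̂^N are equi-integrable if and only if the p-th moments of the piecewise-constant measures μ^N are equi-integrable; consequently, for μ ∈ 𝒫_p(ℝ), W_p(μ̂^N, μ) → 0 if and only if W_p(μ^N, μ) → 0. -/
open Set MeasureTheory Filter
open scoped ENNReal NNReal Topology

/-- The cone `𝒦_N` of `N+1` ordered particles with consecutive gaps at least `1/(N M)`. -/
def InCone (N : ℕ) (M : ℝ) (x : Fin (N+1) → ℝ) : Prop :=
  ∀ i : Fin N, x i.castSucc + 1 / (N * M) ≤ x i.succ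

/-- The empirical measure `(N+1)⁻¹ ∑_i δ_{x_i}`. -/
noncomputable def empMeas (N : ℕ) (x : Fin (N+1) → ℝ) : Measure ℝ :=
  ((N : ℝ≥0∞) + 1)⁻¹ • ∑ i : Fin (N+1), Measure.dirac (x i)

/-- The piecewise-constant measure `∑_{i<N} (N Δx_i)⁻¹ 𝟙_{[x_i,x_{i+1})} ℒ¹`. -/
noncomputable def pcMeas (N : ℕ) (x : Fin (N+1) → ℝ) : Measure ℝ :=
  ∑ i : Fin N, (ENNReal.ofReal (1 / (N * (x i.succ - x i.castSucc)))) •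
    volume.restrict (Ico (x i.castSucc) (x i.succ))

/-- Equi-integrability of the `p`-th moments of a sequence of measures. -/
def EquiIntMoments (p : ℝ) (μ : ℕ → Measure ℝ) : Prop :=
  ∀ ε : ℝ, 0 < ε → ∃ L : ℝ, 0 < L ∧
    limsup (fun N => ∫⁻ y in {y : ℝ | L < |y|}, ENNReal.ofReal (|y| ^ p) ∂(μ N)) atTop
      < ENNReal.ofReal ε

/-- the truncated moment function -/
noncomputable def tailF (p L : ℝ) (y : ℝ) : ℝ≥0∞ :=
  Set.indicator {y : ℝ | L < |y|} (fun y => ENNReal.ofReal (|y| ^ p)) y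

lemma meas_set (L : ℝ) : MeasurableSet {y : ℝ | L < |y|} :=
  measurableSet_lt measurable_const (by fun_prop)

lemma meas_pow (p : ℝ) : Measurable (fun y : ℝ => ENNReal.ofReal (|y| ^ p)) := by
  fun_prop

lemma meas_tailF (p L : ℝ) : Measurable (tailF p L) :=
  (meas_pow p).indicator (meas_set L)

lemma lint_tailF (p L : ℝ) (μ : Measure ℝ) :
    ∫⁻ y in {y : ℝ | L < |y|}, ENNReal.ofReal (|y| ^ p) ∂μ = ∫⁻ y, tailF p L y ∂μ := by
  rw [← lintegral_indicator (meas_set L)]; rfl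

lemma tailF_of_lt {p L y : ℝ} (h : L < |y|) : tailF p L y = ENNReal.ofReal (|y| ^ p) := by
  simp [tailF, h]

lemma tailF_of_le {p L y : ℝ} (h : |y| ≤ L) : tailF p L y = 0 := by
  simp [tailF, h]

lemma tailF_mono {p L y z : ℝ} (hp : 1 ≤ p) (h : |y| ≤ |z|) : tailF p L y ≤ tailF p L z := by
  rcases lt_or_ge L |y| with h1 | h1
  · rw [tailF_of_lt h1, tailF_of_lt (h1.trans_le h)]
    exact ENNReal.ofReal_le_ofReal (Real.rpow_le_rpow (abs_nonneg _) h (by linarith))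
  · rw [tailF_of_le h1]; exact zero_le

lemma emp_lint (N : ℕ) (x : Fin (N+1) → ℝ) (f : ℝ → ℝ≥0∞) :
    ∫⁻ y, f y ∂(empMeas N x) = ((N : ℝ≥0∞) + 1)⁻¹ * ∑ i, f (x i) := by
  simp [empMeas, lintegral_smul_measure, lintegral_dirac]

lemma pc_lint (N : ℕ) (x : Fin (N+1) → ℝ) (f : ℝ → ℝ≥0∞) :
    ∫⁻ y, f y ∂(pcMeas N x) = ∑ i : Fin N,
      (ENNReal.ofReal (1 / (N * (x i.succ - x i.castSucc)))) *
        ∫⁻ y in Ico (x i.castSucc) (x i.succ), f y := by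
  simp [pcMeas, lintegral_smul_measure]

lemma cell_vol {N : ℕ} (hN : 0 < N) {a b : ℝ} (hab : a < b) :
    ENNReal.ofReal (1 / (N * (b - a))) * ENNReal.ofReal (b - a) = (N : ℝ≥0∞)⁻¹ := by
  have hN' : (0:ℝ) < N := by exact_mod_cast hN
  have hb : 0 < b - a := by linarith
  rw [← ENNReal.ofReal_mul (by positivity)]
  have : 1 / (N * (b - a)) * (b - a) = (N:ℝ)⁻¹ := by field_simp
  rw [this, ENNReal.ofReal_inv_of_pos hN', ENNReal.ofReal_natCast]

lemma cell_upper {N : ℕ} (hN : 0 < N) {a b : ℝ} (hab : a < b) (f : ℝ → ℝ≥0∞) (K : ℝ≥0∞)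
    (hf : ∀ y ∈ Ico a b, f y ≤ K) :
    ENNReal.ofReal (1 / (N * (b - a))) * ∫⁻ y in Ico a b, f y ≤ (N : ℝ≥0∞)⁻¹ * K := by
  have h : ∫⁻ y in Ico a b, f y ≤ ∫⁻ y in Ico a b, K :=
    setLIntegral_mono' measurableSet_Ico hf
  rw [setLIntegral_const, Real.volume_Ico] at h
  calc _ ≤ ENNReal.ofReal (1 / (N * (b - a))) * (K * ENNReal.ofReal (b - a)) := by gcongr
    _ = ENNReal.ofReal (1 / (N * (b - a))) * ENNReal.ofReal (b - a) * K := by ring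
    _ = _ := by rw [cell_vol hN hab]

lemma subinterval {a b m : ℝ} (hab : a < b) (hm : m = |a| ∨ m = |b|) :
    ∃ u v : ℝ, a ≤ u ∧ u < v ∧ v ≤ b ∧ b - a ≤ 4 * (v - u) ∧ ∀ y ∈ Ico u v, m / 2 ≤ |y| := by
  by_cases h : |a| ≤ |b|
  · have hm' : m ≤ |b| := by rcases hm with rfl | rfl <;> linarith
    have hb : 0 < b := by
      by_contra hb
      rw [abs_of_nonpos (by linarith : a ≤ 0), abs_of_nonpos (by linarith : b ≤ 0)] at h
      linarith
    rw [abs_of_pos hb] at h hm'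
    have ha := abs_le.1 h
    refine ⟨max a (b/2), b, le_max_left _ _, max_lt hab (by linarith), le_rfl, ?_, ?_⟩
    · rcases max_cases a (b/2) with ⟨h1, _⟩ | ⟨h1, _⟩ <;> rw [h1] <;> linarith
    · intro y hy
      have := le_trans (le_max_right a (b/2)) hy.1
      have := le_abs_self y
      linarith
  · push Not at h
    have hm' : m ≤ |a| := by rcases hm with rfl | rfl <;> linarith
    have hb : a < 0 := by
      by_contra hb
      rw [abs_of_nonneg (by linarith : 0 ≤ a), abs_of_nonneg (by linarith : 0 ≤ b)] at h
      linarith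
    rw [abs_of_neg hb] at h hm'
    have ha := abs_lt.1 h
    refine ⟨a, min b (a/2), le_rfl, lt_min hab (by linarith), min_le_left _ _, ?_, ?_⟩
    · rcases min_cases b (a/2) with ⟨h1, _⟩ | ⟨h1, _⟩ <;> rw [h1] <;> linarith
    · intro y hy
      have := lt_of_lt_of_le hy.2 (min_le_right b (a/2))
      have := neg_le_abs y
      linarith

lemma tail_double {p L m y : ℝ} (hp : 1 ≤ p) (h : |m| / 2 ≤ |y|) :
    tailF p L m ≤ ENNReal.ofReal (2 ^ p) * tailF p (L / 2) y := by
  rcases lt_or_ge L |m| with h1 | h1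
  · rw [tailF_of_lt h1, tailF_of_lt (by linarith), ← ENNReal.ofReal_mul (by positivity),
      ← Real.mul_rpow (by norm_num) (abs_nonneg _)]
    exact ENNReal.ofReal_le_ofReal (Real.rpow_le_rpow (abs_nonneg _) (by linarith) (by linarith))
  · rw [tailF_of_le h1]; exact zero_le

lemma cell_lower {N : ℕ} (hN : 0 < N) {p L a b m : ℝ} (hp : 1 ≤ p) (hab : a < b)
    (hm : m = a ∨ m = b) :
    (N : ℝ≥0∞)⁻¹ * tailF p L m ≤ 4 * ENNReal.ofReal (2 ^ p) *
      (ENNReal.ofReal (1 / (N * (b - a))) * ∫⁻ y in Ico a b, tailF p (L / 2) y) := by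
  obtain ⟨u, v, hau, huv, hvb, hl, hy⟩ := subinterval (m := |m|) hab
    (by rcases hm with rfl | rfl <;> simp)
  have h1 : tailF p L m * ENNReal.ofReal (v - u) ≤
      ENNReal.ofReal (2 ^ p) * ∫⁻ y in Ico a b, tailF p (L / 2) y := by
    calc tailF p L m * ENNReal.ofReal (v - u) = ∫⁻ y in Ico u v, tailF p L m := by
          rw [setLIntegral_const, Real.volume_Ico]
      _ ≤ ∫⁻ y in Ico u v, ENNReal.ofReal (2 ^ p) * tailF p (L / 2) y :=
          setLIntegral_mono' measurableSet_Ico (fun y hyy => tail_double hp (hy y hyy))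
      _ = ENNReal.ofReal (2 ^ p) * ∫⁻ y in Ico u v, tailF p (L / 2) y :=
          lintegral_const_mul _ (meas_tailF _ _)
      _ ≤ _ := by
          gcongr
  rw [← cell_vol hN hab]
  have h2 : ENNReal.ofReal (b - a) ≤ 4 * ENNReal.ofReal (v - u) := by
    have : (4 : ℝ≥0∞) = ENNReal.ofReal 4 := by simp
    rw [this, ← ENNReal.ofReal_mul (by norm_num)]
    exact ENNReal.ofReal_le_ofReal hl
  calc _ ≤ ENNReal.ofReal (1 / (N * (b - a))) * (4 * ENNReal.ofReal (v - u)) * tailF p L m := by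
        gcongr
    _ = 4 * ENNReal.ofReal (1 / (N * (b - a))) * (tailF p L m * ENNReal.ofReal (v - u)) := by ring
    _ ≤ 4 * ENNReal.ofReal (1 / (N * (b - a))) *
        (ENNReal.ofReal (2 ^ p) * ∫⁻ y in Ico a b, tailF p (L / 2) y) := by gcongr
    _ = _ := by ring

lemma sum_ends_le {N : ℕ} (f : Fin (N+1) → ℝ≥0∞) :
    ∑ i : Fin N, (f i.castSucc + f i.succ) ≤ 2 * ∑ i, f i := by
  rw [Finset.sum_add_distrib, two_mul]
  gcongr
  · rw [Fin.sum_univ_castSucc]; exact le_self_add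
  · rw [Fin.sum_univ_succ]; exact le_add_self

lemma sum_le_ends {N : ℕ} (hN : 0 < N) (f : Fin (N+1) → ℝ≥0∞) :
    ∑ i, f i ≤ ∑ i : Fin N, (f i.castSucc + f i.succ) := by
  obtain ⟨n, rfl⟩ : ∃ n, N = n + 1 := ⟨N - 1, by omega⟩
  rw [Finset.sum_add_distrib, Fin.sum_univ_castSucc]
  gcongr
  have := Finset.single_le_sum (f := fun i : Fin (n+1) => f i.succ) (s := Finset.univ)
    (fun i _ => zero_le) (Finset.mem_univ (Fin.last n))
  simpa using this

lemma cone_lt {N : ℕ} {M : ℝ} (hM : 0 < M) {x : Fin (N+1) → ℝ} (hx : InCone N M x) (i : Fin N) :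
    x i.castSucc < x i.succ := by
  have h := hx i
  have hN : (0:ℝ) < N := by exact_mod_cast i.pos
  have : 0 < 1 / (N * M) := by positivity
  linarith

lemma inv_succ_le (N : ℕ) : ((N : ℝ≥0∞) + 1)⁻¹ ≤ (N : ℝ≥0∞)⁻¹ :=
  ENNReal.inv_le_inv.2 le_self_add

lemma inv_le_two {N : ℕ} (hN : 0 < N) : (N : ℝ≥0∞)⁻¹ ≤ 2 * ((N : ℝ≥0∞) + 1)⁻¹ := by
  rw [← div_eq_mul_inv, ENNReal.le_div_iff_mul_le (by simp) (by simp), mul_comm,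
    ← div_eq_mul_inv]
  apply ENNReal.div_le_of_le_mul
  have : (1:ℝ≥0∞) ≤ N := by exact_mod_cast hN
  rw [two_mul]; gcongr

lemma ends_le_emp {N : ℕ} (hN : 0 < N) (x : Fin (N+1) → ℝ) (f : ℝ → ℝ≥0∞) :
    (N : ℝ≥0∞)⁻¹ * ∑ i : Fin N, (f (x i.castSucc) + f (x i.succ)) ≤
      4 * ∫⁻ y, f y ∂(empMeas N x) := by
  rw [emp_lint]
  calc _ ≤ (2 * ((N : ℝ≥0∞) + 1)⁻¹) * (2 * ∑ i, f (x i)) := by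
        gcongr
        · exact inv_le_two hN
        · exact sum_ends_le (fun i => f (x i))
    _ = _ := by ring

lemma pc_le_emp {N : ℕ} (hN : 0 < N) {p L : ℝ} (hp : 1 ≤ p) {x : Fin (N+1) → ℝ}
    (hx : ∀ i : Fin N, x i.castSucc < x i.succ) :
    ∫⁻ y, tailF p L y ∂(pcMeas N x) ≤ 4 * ∫⁻ y, tailF p L y ∂(empMeas N x) := by
  refine le_trans ?_ (ends_le_emp hN x _)
  rw [pc_lint, Finset.mul_sum]
  refine Finset.sum_le_sum (fun i _ => ?_)
  apply cell_upper hN (hx i)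
  intro y hy
  have : |y| ≤ max |x i.castSucc| |x i.succ| := abs_le_max_abs_abs hy.1 hy.2.le
  rcases le_max_iff.1 this with h | h
  · exact (tailF_mono hp h).trans le_self_add
  · exact (tailF_mono hp h).trans le_add_self

lemma emp_le_pc {N : ℕ} (hN : 0 < N) {p L : ℝ} (hp : 1 ≤ p) {x : Fin (N+1) → ℝ}
    (hx : ∀ i : Fin N, x i.castSucc < x i.succ) :
    ∫⁻ y, tailF p L y ∂(empMeas N x) ≤
      (8 * ENNReal.ofReal (2 ^ p)) * ∫⁻ y, tailF p (L / 2) y ∂(pcMeas N x) := by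
  rw [emp_lint, pc_lint]
  calc _ ≤ (N : ℝ≥0∞)⁻¹ * ∑ i : Fin N, (tailF p L (x i.castSucc) + tailF p L (x i.succ)) := by
        exact mul_le_mul' (inv_succ_le N) (sum_le_ends hN (fun i => tailF p L (x i)))
    _ ≤ _ := by
        rw [Finset.mul_sum, Finset.mul_sum]
        refine Finset.sum_le_sum (fun i _ => ?_)
        rw [mul_add]
        refine (add_le_add (cell_lower hN hp (hx i) (Or.inl rfl))
          (cell_lower hN hp (hx i) (Or.inr rfl))).trans (le_of_eq ?_)
        ring

lemma equi_iff (p : ℝ) (μ : ℕ → Measure ℝ) : EquiIntMoments p μ ↔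
    ∀ ε : ℝ, 0 < ε → ∃ L : ℝ, 0 < L ∧
      limsup (fun N => ∫⁻ y, tailF p L y ∂(μ N)) atTop < ENNReal.ofReal ε := by
  simp only [EquiIntMoments, lint_tailF]

/-- transfer of equi-integrability -/
lemma equi_transfer {p : ℝ} {μ ν : ℕ → Measure ℝ} (C c : ℝ) (hC : 0 < C) (hc : 0 < c)
    (h : ∀ L, 0 < L → ∀ᶠ N in atTop,
      ∫⁻ y, tailF p L y ∂(ν N) ≤ ENNReal.ofReal C * ∫⁻ y, tailF p (L * c) y ∂(μ N)) 
    (hμ : EquiIntMoments p μ) : EquiIntMoments p ν := by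
  rw [equi_iff] at *
  intro ε hε
  obtain ⟨L, hL, hlim⟩ := hμ (ε / C) (by positivity)
  refine ⟨L / c, by positivity, ?_⟩
  calc _ ≤ limsup (fun N => ENNReal.ofReal C * ∫⁻ y, tailF p L y ∂(μ N)) atTop := by
        refine limsup_le_limsup ?_
        have := h (L / c) (by positivity)
        rwa [div_mul_cancel₀ _ hc.ne'] at this
    _ = ENNReal.ofReal C * limsup (fun N => ∫⁻ y, tailF p L y ∂(μ N)) atTop :=
        ENNReal.limsup_const_mul_of_ne_top ENNReal.ofReal_ne_top
    _ < ENNReal.ofReal C * ENNReal.ofReal (ε / C) := by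
        rw [ENNReal.mul_lt_mul_iff_right (by simpa using hC) ENNReal.ofReal_ne_top]
        exact hlim
    _ = ENNReal.ofReal ε := by
        rw [← ENNReal.ofReal_mul hC.le, mul_div_cancel₀ _ hC.ne']

open ProbabilityTheory in
lemma glue (σ₁ σ₂ : Measure (ℝ × ℝ)) [IsProbabilityMeasure σ₁] [IsProbabilityMeasure σ₂]
    (h : σ₁.fst = σ₂.fst) :
    ∃ Θ : Measure (ℝ × ℝ × ℝ), IsProbabilityMeasure Θ ∧
      Θ.map (fun q => (q.1, q.2.1)) = σ₁ ∧ Θ.map (fun q => (q.1, q.2.2)) = σ₂ := by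
  refine ⟨σ₁.fst ⊗ₘ (σ₁.condKernel ×ₖ σ₂.condKernel), inferInstance, ?_, ?_⟩
  · conv_rhs => rw [← σ₁.disintegrate σ₁.condKernel]
    refine Measure.ext_of_lintegral _ (fun f hf => ?_)
    rw [lintegral_map hf (by fun_prop), Measure.lintegral_compProd (by fun_prop),
      Measure.lintegral_compProd hf]
    refine lintegral_congr (fun b => ?_)
    rw [Kernel.prod_apply, lintegral_prod _ (by fun_prop)]
    simp
  · conv_rhs => rw [← σ₂.disintegrate σ₂.condKernel, ← h]
    refine Measure.ext_of_lintegral _ (fun f hf => ?_)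
    rw [lintegral_map hf (by fun_prop), Measure.lintegral_compProd (by fun_prop),
      Measure.lintegral_compProd hf]
    refine lintegral_congr (fun b => ?_)
    rw [Kernel.prod_apply, lintegral_prod _ (by fun_prop)]
    simp

lemma pow_split {p a b c : ℝ} (hp : 1 ≤ p) : ENNReal.ofReal (|a - c| ^ p) ≤
    ENNReal.ofReal (2 ^ p) * (ENNReal.ofReal (|a - b| ^ p) + ENNReal.ofReal (|b - c| ^ p)) := by
  have h := abs_sub_le a b c
  rw [mul_add, ← ENNReal.ofReal_mul (by positivity), ← ENNReal.ofReal_mul (by positivity),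
    ← Real.mul_rpow (by norm_num) (abs_nonneg _), ← Real.mul_rpow (by norm_num) (abs_nonneg _)]
  rcases le_total |a - b| |b - c| with h1 | h1
  · refine le_trans ?_ le_add_self
    exact ENNReal.ofReal_le_ofReal (Real.rpow_le_rpow (abs_nonneg _) (by linarith) (by linarith))
  · refine le_trans ?_ le_self_add
    exact ENNReal.ofReal_le_ofReal (Real.rpow_le_rpow (abs_nonneg _) (by linarith) (by linarith))

lemma meas_cost (p : ℝ) : Measurable (fun q : ℝ × ℝ => ENNReal.ofReal (|q.1 - q.2| ^ p)) := by
  fun_prop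

lemma WpCost_comm_le (p : ℝ) (μ ν : Measure ℝ) : WpCost p μ ν ≤ WpCost p ν μ := by
  refine le_sInf ?_
  rintro c ⟨π, hπ, h1, h2, rfl⟩
  refine sInf_le ⟨π.map Prod.swap, Measure.isProbabilityMeasure_map (by fun_prop), ?_, ?_, ?_⟩
  · rw [Measure.map_map (by fun_prop) (by fun_prop), ← h2]; rfl
  · rw [Measure.map_map (by fun_prop) (by fun_prop), ← h1]; rfl
  · rw [lintegral_map (meas_cost p) (by fun_prop)]
    simp [abs_sub_comm]

lemma WpCost_comm (p : ℝ) (μ ν : Measure ℝ) : WpCost p μ ν = WpCost p ν μ :=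
  le_antisymm (WpCost_comm_le _ _ _) (WpCost_comm_le _ _ _)

lemma exists_plan {p : ℝ} {μ ν : Measure ℝ} {t : ℝ≥0∞} (h : WpCost p μ ν < t) :
    ∃ π : Measure (ℝ × ℝ), IsProbabilityMeasure π ∧
    π.map Prod.fst = μ ∧ π.map Prod.snd = ν ∧
    ∫⁻ q, ENNReal.ofReal (|q.1 - q.2| ^ p) ∂π < t := by
  obtain ⟨c, ⟨π, h1, h2, h3, rfl⟩, hc⟩ := sInf_lt_iff.1 h
  exact ⟨π, h1, h2, h3, hc⟩

lemma WpCost_tri {p : ℝ} (hp : 1 ≤ p) {μ ν ρ : Measure ℝ} {s t : ℝ≥0∞}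
    (h1 : WpCost p μ ν < s) (h2 : WpCost p ν ρ < t) :
    WpCost p μ ρ ≤ ENNReal.ofReal (2 ^ p) * (s + t) := by
  rw [WpCost_comm] at h1
  obtain ⟨π₁, i1, f1, s1, c1⟩ := exists_plan h1
  obtain ⟨π₂, i2, f2, s2, c2⟩ := exists_plan h2
  obtain ⟨Θ, iΘ, m1, m2⟩ := glue π₁ π₂ (by rw [Measure.fst, Measure.fst, f1, f2])
  have hle : WpCost p μ ρ ≤ ∫⁻ q, ENNReal.ofReal (|q.1 - q.2| ^ p) ∂(Θ.map (fun q => q.2)) := by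
    refine sInf_le ⟨_, Measure.isProbabilityMeasure_map (by fun_prop), ?_, ?_, rfl⟩
    · rw [← s1, ← m1, Measure.map_map (by fun_prop) (by fun_prop),
        Measure.map_map (by fun_prop) (by fun_prop)]; rfl
    · rw [← s2, ← m2, Measure.map_map (by fun_prop) (by fun_prop),
        Measure.map_map (by fun_prop) (by fun_prop)]; rfl
  rw [← m1, lintegral_map (meas_cost p) (by fun_prop)] at c1
  rw [← m2, lintegral_map (meas_cost p) (by fun_prop)] at c2
  rw [lintegral_map (meas_cost p) (by fun_prop)] at hle
  refine hle.trans ?_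
  calc _ ≤ ∫⁻ q : ℝ × ℝ × ℝ, ENNReal.ofReal (2 ^ p) * (ENNReal.ofReal (|q.1 - q.2.1| ^ p)
          + ENNReal.ofReal (|q.1 - q.2.2| ^ p)) ∂Θ := by
        refine lintegral_mono (fun q => ?_)
        have := pow_split (a := q.2.1) (b := q.1) (c := q.2.2) hp
        rwa [abs_sub_comm q.2.1 q.1] at this
    _ = ENNReal.ofReal (2 ^ p) * (∫⁻ q : ℝ × ℝ × ℝ, ENNReal.ofReal (|q.1 - q.2.1| ^ p) ∂Θ
          + ∫⁻ q : ℝ × ℝ × ℝ, ENNReal.ofReal (|q.1 - q.2.2| ^ p) ∂Θ) := by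
        rw [lintegral_const_mul _ (by fun_prop), lintegral_add_left (by fun_prop)]
    _ ≤ _ := by gcongr

lemma WpCost_tendsto_tri {p : ℝ} (hp : 1 ≤ p) {μ ν ρ : ℕ → Measure ℝ}
    (h1 : Tendsto (fun N => WpCost p (μ N) (ν N)) atTop (𝓝 0))
    (h2 : Tendsto (fun N => WpCost p (ν N) (ρ N)) atTop (𝓝 0)) :
    Tendsto (fun N => WpCost p (μ N) (ρ N)) atTop (𝓝 0) := by
  rw [ENNReal.tendsto_nhds_zero]
  intro ε hε
  obtain ⟨δ, hδ, hδε⟩ : ∃ δ : ℝ≥0∞, 0 < δ ∧ ENNReal.ofReal (2 ^ p) * (δ + δ) ≤ ε := by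
    refine ⟨ε / (2 * ENNReal.ofReal (2 ^ p)), ENNReal.div_pos hε.ne'
      (ENNReal.mul_ne_top (by simp) (by simp)), ?_⟩
    rw [← two_mul, ← mul_assoc, mul_comm (ENNReal.ofReal _)]
    exact ENNReal.mul_div_le
  filter_upwards [h1.eventually_lt_const hδ, h2.eventually_lt_const hδ] with N a b
  exact (WpCost_tri hp a b).trans hδε

/-- Convergence of costs implies equi-integrability. -/
lemma equi_of_Wp {p : ℝ} (hp : 1 ≤ p) {ν : ℕ → Measure ℝ} {μ : Measure ℝ}
    (hμ : (∫⁻ y, ENNReal.ofReal (|y| ^ p) ∂μ) < ⊤)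
    (h : Tendsto (fun N => WpCost p (ν N) μ) atTop (𝓝 0)) : EquiIntMoments p ν := by
  rw [equi_iff]
  intro ε hε
  set C := ENNReal.ofReal (2 ^ p) with hC
  have hC0 : C ≠ 0 := by simp [hC]; positivity
  have hCt : C ≠ ⊤ := by simp [hC]
  -- tails of `μ`
  have htail : Tendsto (fun n : ℕ => ∫⁻ y, tailF p (n : ℝ) y ∂μ) atTop (𝓝 0) := by
    have := tendsto_lintegral_of_dominated_convergence (μ := μ)
      (F := fun n : ℕ => tailF p (n : ℝ)) (f := fun _ => 0)
      (fun y => ENNReal.ofReal (|y| ^ p)) (fun n => meas_tailF _ _)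
      (fun n => ae_of_all _ (fun y => Set.indicator_le_self _ _ _)) hμ.ne
      (ae_of_all _ (fun y => ?_))
    · simpa using this
    · refine tendsto_const_nhds.congr' ?_
      filter_upwards [eventually_ge_atTop (Nat.ceil |y|)] with n hn
      rw [tailF_of_le ((Nat.le_ceil _).trans (by exact_mod_cast hn))]
  set δ := ENNReal.ofReal (ε / 2) / (2 * C) with hδ
  have hδ0 : 0 < δ := ENNReal.div_pos (by simpa using hε) (ENNReal.mul_ne_top (by simp) hCt)
  have hδε : C * (δ + δ) ≤ ENNReal.ofReal (ε / 2) := by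
    rw [← two_mul, ← mul_assoc, mul_comm C]
    exact ENNReal.mul_div_le
  obtain ⟨n, hn, hn0⟩ := ((htail.eventually_lt_const hδ0).and (eventually_gt_atTop 0)).exists
  have hn0' : (0:ℝ) < n := by exact_mod_cast hn0
  refine ⟨2 * n, by positivity, lt_of_le_of_lt ?_
    ((ENNReal.ofReal_lt_ofReal_iff hε).2 (by linarith : ε / 2 < ε))⟩
  refine limsup_le_of_le (by isBoundedDefault) ?_
  filter_upwards [h.eventually_lt_const hδ0] with N hN
  obtain ⟨π, hπ, f1, s1, hc⟩ := exists_plan hN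
  refine le_trans ?_ hδε
  rw [← f1, lintegral_map (meas_tailF _ _) (by fun_prop)]
  rw [← s1, lintegral_map (meas_tailF _ _) (by fun_prop)] at hn
  calc _ ≤ ∫⁻ q : ℝ × ℝ, C * (ENNReal.ofReal (|q.1 - q.2| ^ p) + tailF p n q.2) ∂π := by
        refine lintegral_mono (fun q => ?_)
        rcases le_or_gt (|q.1| / 2) |q.2| with h1 | h1
        · have := tail_double (L := 2 * n) hp h1
          rw [mul_div_cancel_left₀ _ (by norm_num : (2:ℝ) ≠ 0)] at this
          refine this.trans ?_
          gcongr
          exact le_add_self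
        · have h2 : |q.1| ≤ 2 * |q.1 - q.2| := by
            have := abs_sub_abs_le_abs_sub q.1 q.2
            linarith
          calc tailF p (2 * n) q.1 ≤ ENNReal.ofReal (|q.1| ^ p) := Set.indicator_le_self _ _ _
            _ ≤ ENNReal.ofReal ((2 * |q.1 - q.2|) ^ p) := ENNReal.ofReal_le_ofReal
                (Real.rpow_le_rpow (abs_nonneg _) h2 (by linarith))
            _ = C * ENNReal.ofReal (|q.1 - q.2| ^ p) := by
                rw [Real.mul_rpow (by norm_num) (abs_nonneg _), ENNReal.ofReal_mul (by positivity)]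
            _ ≤ _ := by gcongr; exact le_self_add
    _ = C * (∫⁻ q : ℝ × ℝ, ENNReal.ofReal (|q.1 - q.2| ^ p) ∂π
          + ∫⁻ q : ℝ × ℝ, tailF p n q.2 ∂π) := by
        have := meas_tailF p n
        rw [lintegral_const_mul _ (by fun_prop), lintegral_add_left (by fun_prop)]
    _ ≤ _ := by gcongr

/-- The plan between the piecewise constant measure and the empirical one. -/
noncomputable def plan (N : ℕ) (x : Fin (N+1) → ℝ) : Measure (ℝ × ℝ) :=
  ∑ i : Fin N, ((ENNReal.ofReal (1 / (N * (x i.succ - x i.castSucc)))) •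
    volume.restrict (Ico (x i.castSucc) (x i.succ))).prod
      (ENNReal.ofReal ((N - i) / (N + 1)) • Measure.dirac (x i.castSucc) +
        ENNReal.ofReal ((i + 1) / (N + 1)) • Measure.dirac (x i.succ))

lemma weights {N : ℕ} (i : Fin N) :
    ENNReal.ofReal ((N - i) / (N + 1)) + ENNReal.ofReal ((i + 1) / (N + 1)) = 1 := by
  have : (i : ℝ) ≤ N := by exact_mod_cast i.2.le
  rw [← ENNReal.ofReal_add (div_nonneg (by linarith) (by positivity)) (by positivity),
    ← ENNReal.ofReal_one]
  congr 1; field_simp; ring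

lemma plan_fst (N : ℕ) (x : Fin (N+1) → ℝ) : (plan N x).map Prod.fst = pcMeas N x := by
  rw [plan, Measure.map_finset_sum (by fun_prop)]
  refine Finset.sum_congr rfl (fun i _ => ?_)
  rw [Measure.map_fst_prod]
  simp [weights]

lemma plan_snd {N : ℕ} (hN : 0 < N) {x : Fin (N+1) → ℝ}
    (hx : ∀ i : Fin N, x i.castSucc < x i.succ) :
    (plan N x).map Prod.snd = empMeas N x := by
  have hN' : (N : ℝ≥0∞) ≠ 0 := by exact_mod_cast hN.ne'
  rw [plan, Measure.map_finset_sum (by fun_prop)]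
  have h1 : ∀ i : Fin N, Measure.map Prod.snd
      (((ENNReal.ofReal (1 / (N * (x i.succ - x i.castSucc)))) •
    volume.restrict (Ico (x i.castSucc) (x i.succ))).prod
      (ENNReal.ofReal ((N - i) / (N + 1)) • Measure.dirac (x i.castSucc) +
        ENNReal.ofReal ((i + 1) / (N + 1)) • Measure.dirac (x i.succ))) =
      (N : ℝ≥0∞)⁻¹ • (ENNReal.ofReal ((N - i) / (N + 1)) • Measure.dirac (x i.castSucc) +
        ENNReal.ofReal ((i + 1) / (N + 1)) • Measure.dirac (x i.succ)) := by
    intro i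
    rw [Measure.map_snd_prod, Measure.smul_apply, Measure.restrict_apply_univ, Real.volume_Ico,
      smul_eq_mul, cell_vol hN (hx i)]
  rw [Finset.sum_congr rfl (fun i _ => h1 i), ← Finset.smul_sum, Finset.sum_add_distrib]
  have e1 : ∑ i : Fin N, ENNReal.ofReal ((N - i) / (N + 1)) • Measure.dirac (x i.castSucc) =
      ∑ j : Fin (N+1), ENNReal.ofReal ((N - j) / (N + 1)) • Measure.dirac (x j) := by
    rw [Fin.sum_univ_castSucc]; simp
  have e2 : ∑ i : Fin N, ENNReal.ofReal ((i + 1) / (N + 1)) • Measure.dirac (x i.succ) =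
      ∑ j : Fin (N+1), ENNReal.ofReal (j / (N + 1)) • Measure.dirac (x j) := by
    rw [Fin.sum_univ_succ]; simp
  rw [e1, e2, ← Finset.sum_add_distrib, empMeas, Finset.smul_sum, Finset.smul_sum]
  refine Finset.sum_congr rfl (fun j _ => ?_)
  rw [← add_smul, smul_smul]
  congr 1
  have hj : (j : ℝ) ≤ N := by exact_mod_cast Nat.lt_succ_iff.1 j.2
  rw [← ENNReal.ofReal_add (div_nonneg (by linarith) (by positivity)) (by positivity)]
  have : ((N:ℝ) - j) / (N + 1) + j / (N + 1) = N / (N + 1) := by ring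
  rw [this, ENNReal.ofReal_div_of_pos (by positivity), ENNReal.ofReal_add (by positivity)
    (by positivity), ENNReal.ofReal_natCast, ENNReal.ofReal_one, div_eq_mul_inv, ← mul_assoc,
    ENNReal.inv_mul_cancel hN' (by simp), one_mul]

lemma emp_prob (N : ℕ) (x : Fin (N+1) → ℝ) : IsProbabilityMeasure (empMeas N x) := by
  constructor
  have := emp_lint N x (fun _ => 1)
  simp only [lintegral_const, one_mul] at this
  rw [this]
  simp
  exact ENNReal.inv_mul_cancel (by simp) (by simp)

lemma cost_plan {N : ℕ} (hN : 0 < N) {p : ℝ} (hp : 1 ≤ p) {x : Fin (N+1) → ℝ}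
    (hx : ∀ i : Fin N, x i.castSucc < x i.succ) :
    WpCost p (pcMeas N x) (empMeas N x) ≤
      ∑ i : Fin N, (N : ℝ≥0∞)⁻¹ * ENNReal.ofReal ((x i.succ - x i.castSucc) ^ p) := by
  have hprob : IsProbabilityMeasure (plan N x) := by
    have := emp_prob N x
    rw [← plan_snd hN hx] at this
    constructor
    have := this.measure_univ
    rwa [Measure.map_apply measurable_snd MeasurableSet.univ, preimage_univ] at this
  have hle : WpCost p (pcMeas N x) (empMeas N x) ≤
      ∫⁻ q, ENNReal.ofReal (|q.1 - q.2| ^ p) ∂(plan N x) :=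
    sInf_le ⟨plan N x, hprob, plan_fst N x, plan_snd hN hx, rfl⟩
  refine hle.trans ?_
  rw [plan, lintegral_finsetSum_measure]
  refine Finset.sum_le_sum (fun i _ => ?_)
  rw [lintegral_prod _ (by fun_prop), lintegral_smul_measure, smul_eq_mul]
  apply cell_upper hN (hx i)
  intro y hy
  rw [lintegral_add_measure, lintegral_smul_measure, lintegral_smul_measure,
    lintegral_dirac, lintegral_dirac, smul_eq_mul, smul_eq_mul]
  have hy1 := hy.1
  have hy2 := hy.2
  calc _ ≤ ENNReal.ofReal ((N - i) / (N + 1)) * ENNReal.ofReal ((x i.succ - x i.castSucc) ^ p) +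
        ENNReal.ofReal ((i + 1) / (N + 1)) * ENNReal.ofReal ((x i.succ - x i.castSucc) ^ p) := by
        gcongr
        · exact abs_le.2 ⟨by linarith, by linarith⟩
        · exact abs_le.2 ⟨by linarith, by linarith⟩
    _ = _ := by rw [← add_mul, weights, one_mul]

lemma gap_bound {p L a b : ℝ} (hp : 1 ≤ p) (hL : 0 < L) (hab : a < b) :
    ENNReal.ofReal ((b - a) ^ p) ≤
      ENNReal.ofReal ((2 * L) ^ (p - 1) * (max (-L) (min b L) - max (-L) (min a L))) +
      ENNReal.ofReal (2 ^ p) * (tailF p L a + tailF p L b) := by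
  have hba : 0 < b - a := by linarith
  by_cases hin : |a| ≤ L ∧ |b| ≤ L
  · refine le_trans ?_ le_self_add
    have h1 := abs_le.1 hin.1
    have h2 := abs_le.1 hin.2
    rw [min_eq_left h1.2, min_eq_left h2.2, max_eq_right h1.1, max_eq_right h2.1]
    apply ENNReal.ofReal_le_ofReal
    have : (b - a) ^ p = (b - a) ^ (p - 1) * (b - a) := by
      rw [← Real.rpow_add_one hba.ne']; simp
    rw [this]
    gcongr
    linarith
  · refine le_trans ?_ le_add_self
    have key : ∀ m : ℝ, L < |m| → b - a ≤ 2 * |m| →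
        ENNReal.ofReal ((b - a) ^ p) ≤ ENNReal.ofReal (2 ^ p) * tailF p L m := by
      intro m hm hle
      rw [tailF_of_lt hm, ← ENNReal.ofReal_mul (by positivity),
        ← Real.mul_rpow (by norm_num) (abs_nonneg _)]
      exact ENNReal.ofReal_le_ofReal (Real.rpow_le_rpow hba.le hle (by linarith))
    have hb := le_abs_self b
    have ha := neg_le_abs a
    rw [mul_add]
    rcases le_total |a| |b| with h | h
    · refine le_trans (key b ?_ (by linarith)) le_add_self
      by_contra hc; push Not at hc
      exact hin ⟨h.trans hc, hc⟩
    · refine le_trans (key a ?_ (by linarith)) le_self_add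
      by_contra hc; push Not at hc
      exact hin ⟨hc, h.trans hc⟩

lemma telescope {N : ℕ} (f : Fin (N+1) → ℝ) :
    ∑ i : Fin N, (f i.succ - f i.castSucc) = f (Fin.last N) - f 0 := by
  have h1 := Fin.sum_univ_succ f
  have h2 := Fin.sum_univ_castSucc f
  rw [Finset.sum_sub_distrib]
  linarith

lemma cost_bound {N : ℕ} (hN : 0 < N) {p L : ℝ} (hp : 1 ≤ p) (hL : 0 < L) {x : Fin (N+1) → ℝ}
    (hx : ∀ i : Fin N, x i.castSucc < x i.succ) :
    WpCost p (pcMeas N x) (empMeas N x) ≤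
      (N : ℝ≥0∞)⁻¹ * ENNReal.ofReal ((2 * L) ^ (p - 1) * (2 * L)) +
      ENNReal.ofReal (2 ^ p) * 4 * ∫⁻ y, tailF p L y ∂(empMeas N x) := by
  refine (cost_plan hN hp hx).trans ?_
  rw [← Finset.mul_sum]
  set φ : ℝ → ℝ := fun t => max (-L) (min t L) with hφ
  have hφm : Monotone φ := fun s t hst => max_le_max le_rfl (min_le_min hst le_rfl)
  have h1 : ∑ i : Fin N, ENNReal.ofReal ((2 * L) ^ (p - 1) * (φ (x i.succ) - φ (x i.castSucc)))
      ≤ ENNReal.ofReal ((2 * L) ^ (p - 1) * (2 * L)) := by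
    rw [← ENNReal.ofReal_sum_of_nonneg (fun i _ => mul_nonneg (by positivity)
      (sub_nonneg.2 (hφm (hx i).le))), ← Finset.mul_sum, telescope (fun i => φ (x i))]
    apply ENNReal.ofReal_le_ofReal
    gcongr
    have a1 : φ (x (Fin.last N)) ≤ L := max_le (by linarith) (min_le_right _ _)
    have a2 : -L ≤ φ (x 0) := le_max_left _ _
    linarith
  calc _ ≤ (N : ℝ≥0∞)⁻¹ * ∑ i : Fin N,
        (ENNReal.ofReal ((2 * L) ^ (p - 1) * (φ (x i.succ) - φ (x i.castSucc))) +
      ENNReal.ofReal (2 ^ p) * (tailF p L (x i.castSucc) + tailF p L (x i.succ))) := by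
        gcongr with i
        exact gap_bound hp hL (hx i)
    _ = (N : ℝ≥0∞)⁻¹ * ∑ i : Fin N,
        ENNReal.ofReal ((2 * L) ^ (p - 1) * (φ (x i.succ) - φ (x i.castSucc))) +
        ENNReal.ofReal (2 ^ p) * ((N : ℝ≥0∞)⁻¹ *
          ∑ i : Fin N, (tailF p L (x i.castSucc) + tailF p L (x i.succ))) := by
        rw [Finset.sum_add_distrib, ← Finset.mul_sum, mul_add]; ring
    _ ≤ _ := by
        rw [mul_assoc (ENNReal.ofReal (2 ^ p))]
        exact add_le_add (mul_le_mul' le_rfl h1) (mul_le_mul' le_rfl (ends_le_emp hN x _))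

lemma pc_emp_tendsto {p : ℝ} (hp : 1 ≤ p) {x : (N : ℕ) → Fin (N+1) → ℝ}
    (hx : ∀ N, ∀ i : Fin N, x N i.castSucc < x N i.succ)
    (h : EquiIntMoments p (fun N => empMeas N (x N))) :
    Tendsto (fun N => WpCost p (pcMeas N (x N)) (empMeas N (x N))) atTop (𝓝 0) := by
  rw [equi_iff] at h
  apply tendsto_order.2 ⟨fun a ha => absurd ha (by simp), ?_⟩
  intro ε hε
  obtain ⟨r, hr0, hrε⟩ := ENNReal.lt_iff_exists_real_btwn.1 hε |>.imp fun r hr => 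
    (⟨ENNReal.ofReal_pos.1 hr.2.1, hr.2.2⟩ : 0 < r ∧ ENNReal.ofReal r < ε)
  have hpos : (0:ℝ) < 2 ^ p * 4 := by positivity
  obtain ⟨L, hL, hlim⟩ := h (r / 2 / (2 ^ p * 4)) (by positivity)
  have hlim' := eventually_lt_of_limsup_lt hlim
  have ht : Tendsto (fun N : ℕ => (N : ℝ≥0∞)⁻¹ * ENNReal.ofReal ((2 * L) ^ (p - 1) * (2 * L)))
      atTop (𝓝 0) := by
    have := ENNReal.Tendsto.mul_const ENNReal.tendsto_inv_nat_nhds_zero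
      (Or.inr (ENNReal.ofReal_ne_top (r := (2 * L) ^ (p - 1) * (2 * L))))
    simpa using this
  filter_upwards [hlim', ht.eventually_lt_const (ENNReal.ofReal_pos.2 (half_pos hr0)),
    eventually_gt_atTop 0] with N h1 h2 hN
  refine lt_of_le_of_lt ?_ hrε
  refine (cost_bound hN hp hL (hx N)).trans ?_
  calc _ ≤ ENNReal.ofReal (r / 2) + ENNReal.ofReal (2 ^ p) * 4 *
        ENNReal.ofReal (r / 2 / (2 ^ p * 4)) := by gcongr
    _ = ENNReal.ofReal r := by
        have : (4 : ℝ≥0∞) = ENNReal.ofReal 4 := by simp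
        rw [this, ← ENNReal.ofReal_mul (by positivity), ← ENNReal.ofReal_mul (by positivity),
          mul_div_cancel₀ _ hpos.ne', ← ENNReal.ofReal_add (by positivity) (by positivity)]
        congr 1; ring

/-- the `p`-th moments of the empirical measures are equi-integrable iff
those of the piecewise-constant measures are; consequently, for `μ ∈ 𝒫_p(ℝ)`,
`W_p(μ̂^N, μ) → 0` iff `W_p(μ^N, μ) → 0`. -/
theorem emp_pc_equiintegrable_and_Wp (p M : ℝ) (hp : 1 ≤ p) (hM : 0 < M)
    (x : (N : ℕ) → Fin (N+1) → ℝ) (hx : ∀ N, InCone N M (x N)) :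
    (EquiIntMoments p (fun N => empMeas N (x N))
      ↔ EquiIntMoments p (fun N => pcMeas N (x N))) ∧
    (∀ μ : Measure ℝ, IsProbabilityMeasure μ →
      (∫⁻ y, ENNReal.ofReal (|y| ^ p) ∂μ) < ⊤ →
      (Tendsto (fun N => WpCost p (empMeas N (x N)) μ) atTop (𝓝 0)
        ↔ Tendsto (fun N => WpCost p (pcMeas N (x N)) μ) atTop (𝓝 0))) := by
  have hx' : ∀ N, ∀ i : Fin N, x N i.castSucc < x N i.succ := fun N i => cone_lt hM (hx N) i
  have hequi : EquiIntMoments p (fun N => empMeas N (x N))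
      ↔ EquiIntMoments p (fun N => pcMeas N (x N)) := by
    constructor
    · refine equi_transfer 4 1 (by norm_num) (by norm_num) (fun L _ => ?_)
      filter_upwards [eventually_gt_atTop 0] with N hN
      simpa using pc_le_emp hN hp (hx' N)
    · refine equi_transfer (8 * 2 ^ p) (1 / 2) (by positivity) (by norm_num) (fun L _ => ?_)
      filter_upwards [eventually_gt_atTop 0] with N hN
      have := emp_le_pc (L := L) hN hp (hx' N)
      rw [ENNReal.ofReal_mul (by norm_num), mul_one_div]
      simpa using this
  refine ⟨hequi, fun μ _ hμ => ⟨fun h => ?_, fun h => ?_⟩⟩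
  · exact WpCost_tendsto_tri hp (pc_emp_tendsto hp hx' (equi_of_Wp hp hμ h)) h
  · have h1 := pc_emp_tendsto hp hx' (hequi.2 (equi_of_Wp hp hμ h))
    simp_rw [WpCost_comm p (pcMeas _ _) (empMeas _ _)] at h1
    exact WpCost_tendsto_tri hp h1 h
end
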